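/- arXiv:2103.12008 — 2 statements merged into one kernel-verified Lean document; each statement's English description precedes it below -/
import Mathlib

section
/- Let S be an unramified regular local ring of mixed characteristic p ≥ 3 and let f = h₁^p + a·p, g = h₂^p + b·p with h₁,h₂,a,b ∈ S. Then: (i) the ideal (p, h₁, h₂) of S can be generated by two elements or equals S if and only if the same holds for the ideal (p, f, g); (ii) the ideal (p, h₁, h₂) has grade three (i.e. contains an S-regular sequence of length three) if and only if (p, f, g) has grade three. -/
/-- A height one prime ideal of a commutative ring. -/
def IsHeightOnePrime {S : Type*} [CommRing S] (P : Ideal S) : Prop :=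
  ∃ hP : P.IsPrime, Order.height (⟨P, hP⟩ : PrimeSpectrum S) = 1

/-- `c ∈ S` is square free if `P S_P = c S_P` for every height one prime `P` containing `c`. -/
def PaperSquarefree {S : Type*} [CommRing S] (c : S) : Prop :=
  ∀ (P : Ideal S) (hP : P.IsPrime), Order.height (⟨P, hP⟩ : PrimeSpectrum S) = 1 → c ∈ P →
    haveI := hP
    Ideal.map (algebraMap S (Localization.AtPrime P)) P =
      Ideal.span {algebraMap S (Localization.AtPrime P) c}

/-- Two elements satisfy `𝒜₁` if no height one prime contains both of them. -/
def SatisfiesA1 {S : Type*} [CommRing S] (f g : S) : Prop :=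
  ∀ P : Ideal S, IsHeightOnePrime P → ¬(f ∈ P ∧ g ∈ P)

/-- The depth of a module over a local ring: the supremum of the lengths of
regular sequences on `M` contained in the maximal ideal. -/
noncomputable def modDepth (S : Type*) [CommRing S] [IsLocalRing S]
    (M : Type*) [AddCommGroup M] [Module S M] : ℕ∞ :=
  sSup {n : ℕ∞ | ∃ rs : List S, (rs.length : ℕ∞) = n ∧
    (∀ r ∈ rs, r ∈ IsLocalRing.maximalIdeal S) ∧ RingTheory.Sequence.IsRegular M rs}

/-- A commutative ring is Cohen-Macaulay if each of its localizations at a prime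
has depth equal to its Krull dimension. -/
def IsCMRing (R : Type*) [CommRing R] : Prop :=
  ∀ (Q : Ideal R) (hQ : Q.IsPrime),
    haveI := hQ
    (modDepth (Localization.AtPrime Q) (Localization.AtPrime Q) : WithBot ℕ∞) =
      ringKrullDim (Localization.AtPrime Q)

/-- The `n`-th symbolic power of a prime ideal `P`, i.e. `Pⁿ A_P ∩ A`. -/
noncomputable def symbPow {A : Type*} [CommRing A] (P : Ideal A) (hP : P.IsPrime) (n : ℕ) :
    Ideal A :=
  haveI := hP
  Ideal.comap (algebraMap A (Localization.AtPrime P))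
    (Ideal.map (algebraMap A (Localization.AtPrime P)) (P ^ n))

/-- `ω`, as an element of the subalgebra `A = S[ω,μ]`. -/
noncomputable def omegaA {S : Type*} [CommRing S] {K : Type*} [Field K] [Algebra S K]
    (ω μ : K) : Algebra.adjoin S ({ω, μ} : Set K) :=
  ⟨ω, Algebra.subset_adjoin (Set.mem_insert _ _)⟩

/-- `μ`, as an element of the subalgebra `A = S[ω,μ]`. -/
noncomputable def muA {S : Type*} [CommRing S] {K : Type*} [Field K] [Algebra S K]
    (ω μ : K) : Algebra.adjoin S ({ω, μ} : Set K) :=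
  ⟨μ, Algebra.subset_adjoin (Set.mem_insert_of_mem _ rfl)⟩

/-- The ideal `P = (p, ω−h₁, μ−h₂)` of `A = S[ω,μ]`. -/
noncomputable def Pid {S : Type*} [CommRing S] {K : Type*} [Field K] [Algebra S K]
    (p : ℕ) (ω μ : K) (h₁ h₂ : S) : Ideal (Algebra.adjoin S ({ω, μ} : Set K)) :=
  Ideal.span {(p : Algebra.adjoin S ({ω, μ} : Set K)),
    omegaA ω μ - algebraMap S _ h₁, muA ω μ - algebraMap S _ h₂}

/-- The colon module `(A :_K N) = {x ∈ K : x·N ⊆ A}`, as an `S`-submodule of `K`. -/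
noncomputable def colonSubmodule (S : Type*) [CommRing S] (K : Type*) [Field K] [Algebra S K]
    (A : Subalgebra S K) (N : Set K) : Submodule S K where
  carrier := {x : K | ∀ z ∈ N, x * z ∈ A}
  add_mem' := fun hx hy z hz => by
    simpa [add_mul] using add_mem (hx z hz) (hy z hz)
  zero_mem' := fun z hz => by simpa using A.zero_mem
  smul_mem' := fun c x hx z hz => by
    rw [Algebra.smul_def, mul_assoc]
    exact mul_mem (A.algebraMap_mem c) (hx z hz)

/-- `M` admits a free resolution `0 → Sⁿ → Sᵐ → M → 0`; for a finitely generated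
module over a Noetherian local ring this says exactly `pd_S(M) ≤ 1`. -/
def HasFreeResLengthLE1 (S : Type*) [CommRing S] (M : Type*) [AddCommGroup M] [Module S M] :
    Prop :=
  ∃ (n m : ℕ) (φ : (Fin n → S) →ₗ[S] (Fin m → S)) (ψ : (Fin m → S) →ₗ[S] M),
    Function.Injective φ ∧ Function.Surjective ψ ∧ LinearMap.range φ = LinearMap.ker ψ

/-- The ideal `Q` contains an `S`-regular sequence of length three, i.e. `Q` has grade
(at least) three. -/
def ContainsRegSeq3 (S : Type*) [CommRing S] (Q : Ideal S) : Prop :=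
  ∃ rs : List S, rs.length = 3 ∧ (∀ r ∈ rs, r ∈ Q) ∧ RingTheory.Sequence.IsRegular S rs

/-!
Modulo `p` the elements `f` and `g` become the `p`-th powers of the residues of `h₁` and `h₂`. Since
`p ∉ 𝔪²`, the ring `S ⧸ (p)` is again a regular local ring, hence a normal domain, and an ideal of
`S` containing `p` is generated by two elements or improper iff its image in `S ⧸ (p)` is
principal. For the image of `(p, h₁, h₂)` this means that one of the residues of `h₁` and `h₂`
divides the other, which in a normal domain holds iff it holds for their `p`-th powers. For the
grade, `(p, h₁, h₂)` and `(p, f, g)` have the same radical, and raising the terms of a regular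
sequence to positive powers keeps it regular.

Regular local rings are normal by induction on the dimension: for a Noetherian domain, normality
means that `bⁿ ∣ d aⁿ` for all `n` and some `d ≠ 0` forces `b ∣ a`, a condition that lifts from
`R ⧸ (x)` to `R` by successive approximation modulo the powers of `x`.
-/

open IsLocalRing RingTheory.Sequence

universe u

section IntegrallyClosed

theorem mem_of_forall_mem_sup_pow {R : Type*} [CommRing R] [IsNoetherianRing R] {I J : Ideal R}
    (hI : I ≤ Ideal.jacobson ⊥) {a : R} (ha : ∀ n, a ∈ J ⊔ I ^ n) : a ∈ J := by
  have : IsHausdorff I (R ⧸ J) := .of_le_jacobson I (R ⧸ J) hI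
  rw [← Ideal.Quotient.eq_zero_iff_mem]
  refine this.haus _ fun n ↦ SModEq.zero.2 ?_
  obtain ⟨j, hj, i, hi, rfl⟩ := Submodule.mem_sup.1 (ha n)
  rw [map_add, Ideal.Quotient.eq_zero_iff_mem.2 hj, zero_add,
    ← mul_one i, map_mul, map_one, ← Ideal.Quotient.algebraMap_eq, ← Algebra.smul_def]
  exact Submodule.smul_mem_smul hi Submodule.mem_top

variable {R : Type*} [CommRing R]

theorem pow_dvd_mul_sub_mul_pow {a b d : R} (h : ∀ n, b ^ n ∣ d * a ^ n) (c : R) (n : ℕ) :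
    b ^ n ∣ d * (a - b * c) ^ n := by
  rw [sub_eq_add_neg, add_pow, Finset.mul_sum]
  refine Finset.dvd_sum fun i hi ↦ ?_
  have hb : b ^ (n - i) ∣ (-(b * c)) ^ (n - i) :=
    pow_dvd_pow_of_dvd (dvd_neg.2 (dvd_mul_right b c)) _
  rw [← mul_assoc, ← mul_assoc, ← Nat.add_sub_of_le (Finset.mem_range_succ_iff.1 hi), pow_add,
    Nat.add_sub_cancel_left]
  exact (mul_dvd_mul (h i) hb).mul_right _

variable [IsDomain R]

theorem isIntegrallyClosed_iff_forall_pow_dvd [IsNoetherianRing R] :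
    IsIntegrallyClosed R ↔
      ∀ {a b d : R}, d ≠ 0 → (∀ n, b ^ n ∣ d * a ^ n) → b ∣ a := by
  let K := FractionRing R
  have mk_pow {a b d e : R} (hb : b ≠ 0) (n : ℕ) :
      d • (algebraMap R K a / algebraMap R K b) ^ n = algebraMap R K e ↔ d * a ^ n = b ^ n * e := by
    have hb' : algebraMap R K b ≠ 0 := by simpa using hb
    rw [Algebra.smul_def, div_pow, mul_div_assoc', div_eq_iff (pow_ne_zero n hb'), mul_comm (b ^ n)]
    simp only [← map_pow, ← map_mul, (IsFractionRing.injective R K).eq_iff]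
  constructor
  · intro _ a b d hd h
    rcases eq_or_ne b 0 with rfl | hb
    · simpa [hd] using h 1
    have hy : IsAlmostIntegral R (algebraMap R K a / algebraMap R K b) := by
      refine ⟨d, mem_nonZeroDivisors_of_ne_zero hd, fun n ↦ ?_⟩
      obtain ⟨e, he⟩ := h n
      exact ⟨e, ((mk_pow hb n).2 he).symm⟩
    obtain ⟨c, hc⟩ := IsIntegrallyClosed.algebraMap_eq_of_integral hy.isIntegral
    exact ⟨c, by simpa using (mk_pow (d := 1) hb 1).1 (by simpa using hc.symm)⟩
  · intro h
    rw [isIntegrallyClosed_iff K]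
    intro y hy
    obtain ⟨a, b, hb, rfl⟩ := IsFractionRing.div_surjective (A := R) y
    replace hb := nonZeroDivisors.ne_zero hb
    obtain ⟨d, hd, hdy⟩ := hy.isAlmostIntegral
    obtain ⟨c, rfl⟩ := h (nonZeroDivisors.ne_zero hd) fun n ↦ by
      obtain ⟨e, he⟩ := hdy n
      exact ⟨e, (mk_pow hb n).1 he.symm⟩
    exact ⟨c, by simpa using ((mk_pow (a := b * c) (d := 1) hb 1).2 (by simp)).symm⟩

variable {x : R} (hx : Prime x)
include hx

theorem dvd_of_dvd_prime_pow_mul {b c : R} {n : ℕ} (hb : ¬ x ∣ b) (h : b ∣ x ^ n * c) :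
    b ∣ c := by
  obtain ⟨e, he⟩ := h
  obtain ⟨e, rfl⟩ := hx.pow_dvd_of_dvd_mul_left n hb ⟨c, he.symm⟩
  exact ⟨e, mul_left_cancel₀ (pow_ne_zero n hx.ne_zero) (by rw [he]; ring)⟩

theorem prime_dvd_of_forall_pow_dvd_mul_pow [WfDvdMonoid R] {a d : R} (hd : d ≠ 0)
    (h : ∀ n, x ^ n ∣ d * a ^ n) : x ∣ a := by
  by_contra ha
  obtain ⟨n, hn⟩ := FiniteMultiplicity.of_not_isUnit hx.not_isUnit hd
  exact hn <| hx.pow_dvd_of_dvd_mul_right _ (fun h ↦ ha (hx.dvd_of_dvd_pow h)) (h (n + 1))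

variable [IsNoetherianRing R] [IsIntegrallyClosed (R ⧸ Ideal.span {x})]

theorem mem_span_sup_span_pow_of_forall_pow_dvd {a b d : R} (hb : ¬ x ∣ b) (hd : ¬ x ∣ d)
    (h : ∀ n, b ^ n ∣ d * a ^ n) (k : ℕ) :
    a ∈ Ideal.span {b} ⊔ Ideal.span {x} ^ k := by
  have : (Ideal.span {x}).IsPrime := (Ideal.span_singleton_prime hx.ne_zero).2 hx
  let π := Ideal.Quotient.mk (Ideal.span {x})
  induction k generalizing a with
  | zero => simp
  | succ k ih =>
    have hπd : π d ≠ 0 := by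
      rwa [Ne, Ideal.Quotient.eq_zero_iff_mem, Ideal.mem_span_singleton]
    have hdvd : π b ∣ π a := isIntegrallyClosed_iff_forall_pow_dvd.1 ‹_› hπd fun n ↦ by
      simpa using map_dvd π (h n)
    obtain ⟨c, a', ha⟩ : ∃ c a', a - b * c = x * a' := by
      obtain ⟨c, hc⟩ := hdvd
      obtain ⟨c, rfl⟩ := Ideal.Quotient.mk_surjective c
      rw [← map_mul, Ideal.Quotient.eq, Ideal.mem_span_singleton] at hc
      exact ⟨c, hc⟩
    have ha' : a' ∈ Ideal.span {b} ⊔ Ideal.span {x} ^ k := ih fun n ↦ by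
      refine dvd_of_dvd_prime_pow_mul hx (n := n) (fun h ↦ hb (hx.dvd_of_dvd_pow h)) ?_
      simpa only [ha, mul_pow, mul_left_comm] using pow_dvd_mul_sub_mul_pow h c n
    rw [sub_eq_iff_eq_add.1 ha, pow_succ']
    refine add_mem ?_ (Ideal.mem_sup_left (Ideal.mem_span_singleton.2 (dvd_mul_right b c)))
    have := Ideal.mul_mem_mul (Ideal.mem_span_singleton_self x) ha'
    rw [Ideal.mul_sup] at this
    exact sup_le_sup_right (α := Ideal R) Ideal.mul_le_right _ this

theorem isIntegrallyClosed_of_quotient_span_singleton (hxJ : x ∈ Ideal.jacobson (⊥ : Ideal R)) :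
    IsIntegrallyClosed R := by
  rw [isIntegrallyClosed_iff_forall_pow_dvd]
  intro a b d hd h
  rcases eq_or_ne b 0 with rfl | hb
  · simpa [hd] using h 1
  obtain ⟨j, d, hxd, rfl⟩ := WfDvdMonoid.max_power_factor hd hx.irreducible
  obtain ⟨k, b, hxb, rfl⟩ := WfDvdMonoid.max_power_factor hb hx.irreducible
  clear hb
  induction k generalizing a with
  | zero =>
    simp only [pow_zero, one_mul] at h ⊢
    refine Ideal.mem_span_singleton.1 <| mem_of_forall_mem_sup_pow
      ((Ideal.span_singleton_le_iff_mem _).2 hxJ) <|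
      mem_span_sup_span_pow_of_forall_pow_dvd hx hxb hxd fun n ↦ ?_
    refine dvd_of_dvd_prime_pow_mul hx (n := j) (fun h ↦ hxb (hx.dvd_of_dvd_pow h)) ?_
    simpa only [mul_assoc] using h n
  | succ k ih =>
    have hxb' : x ∣ x ^ (k + 1) * b := (dvd_pow_self x k.succ_ne_zero).mul_right b
    obtain ⟨a, rfl⟩ := prime_dvd_of_forall_pow_dvd_mul_pow hx hd fun n ↦
      (pow_dvd_pow_of_dvd hxb' n).trans (h n)
    rw [pow_succ', mul_assoc]
    refine mul_dvd_mul_left x (ih fun n ↦ ?_)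
    rw [← mul_dvd_mul_iff_left (pow_ne_zero n hx.ne_zero)]
    convert h n using 1 <;> ring

end IntegrallyClosed

section RegularLocalRing

section

variable {R : Type*} [CommRing R] [IsLocalRing R] {x : R}

theorem isRegularLocalRing_of_span_finset_eq_maximalIdeal [IsNoetherianRing R] {s : Finset R}
    (hs : Ideal.span (s : Set R) = maximalIdeal R)
    (hcard : (s.card : WithBot ℕ∞) = ringKrullDim R) : IsRegularLocalRing R := by
  refine .of_spanFinrank_maximalIdeal_le R ?_
  rw [← hcard, ← hs, ← Set.ncard_coe_finset s]
  exact_mod_cast Submodule.spanFinrank_span_le_ncard_of_finite s.finite_toSet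

theorem exists_span_insert_erase_eq_maximalIdeal [DecidableEq R] {s : Finset R}
    (hs : Ideal.span (s : Set R) = maximalIdeal R) (hx : x ∈ maximalIdeal R)
    (hx2 : x ∉ maximalIdeal R ^ 2) :
    ∃ y ∈ s, Ideal.span (insert x (s.erase y : Set R)) = maximalIdeal R := by
  obtain ⟨c, -, rfl⟩ := Submodule.mem_span_finset.1 (hs ▸ hx : x ∈ Ideal.span (s : Set R))
  have hsm {z : R} (hz : z ∈ s) : z ∈ maximalIdeal R := hs ▸ Ideal.subset_span hz
  obtain ⟨y, hy, hcy⟩ : ∃ y ∈ s, IsUnit (c y) := by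
    by_contra! hc
    refine hx2 (Ideal.sum_mem _ fun y hy ↦ ?_)
    rw [pow_two]
    exact Ideal.mul_mem_mul ((mem_maximalIdeal _).2 (hc y hy)) (hsm hy)
  refine ⟨y, hy, le_antisymm (Ideal.span_le.2 (Set.insert_subset hx fun z hz ↦
    hsm (Finset.mem_of_mem_erase hz))) ?_⟩
  rw [← hs, Ideal.span_le]
  intro z hz
  rcases eq_or_ne z y with rfl | hzy
  · refine (Ideal.unit_mul_mem_iff_mem _ hcy).1 ?_
    rw [← smul_eq_mul, ← add_sub_cancel_right (c z • z) (∑ i ∈ s.erase z, c i • i),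
      Finset.add_sum_erase s (fun i ↦ c i • i) hy]
    exact sub_mem (Ideal.subset_span (.inl rfl)) <| Ideal.sum_mem _ fun i hi ↦
      Ideal.mul_mem_left _ _ (Ideal.subset_span (.inr hi))
  · exact Ideal.subset_span (.inr (Finset.mem_erase.2 ⟨hzy, hz⟩))

variable [IsNoetherianRing R]

theorem spanFinrank_maximalIdeal_quotient_add_one_le [IsLocalRing (R ⧸ Ideal.span {x})]
    (hx : x ∈ maximalIdeal R) (hx2 : x ∉ maximalIdeal R ^ 2) :
    (maximalIdeal (R ⧸ Ideal.span {x})).spanFinrank + 1 ≤ (maximalIdeal R).spanFinrank := by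
  classical
  let π := Ideal.Quotient.mk (Ideal.span {x})
  obtain ⟨s, hcard, hs⟩ :=
    (IsNoetherian.noetherian (maximalIdeal R)).exists_span_finset_card_eq_spanFinrank
  obtain ⟨y, hy, hspan⟩ := exists_span_insert_erase_eq_maximalIdeal hs hx hx2
  have hπx : π x = 0 := Ideal.Quotient.eq_zero_iff_mem.2 (Ideal.mem_span_singleton_self x)
  have hmap : maximalIdeal (R ⧸ Ideal.span {x}) = Ideal.span (π '' (s.erase y)) := by
    rw [← IsLocalRing.map_maximalIdeal_of_surjective π Ideal.Quotient.mk_surjective, ← hspan,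
      Ideal.map_span, Set.image_insert_eq, hπx, Ideal.span_insert_zero]
  calc (maximalIdeal (R ⧸ Ideal.span {x})).spanFinrank + 1
      ≤ (π '' (s.erase y)).ncard + 1 := by
        rw [hmap]
        gcongr
        exact Submodule.spanFinrank_span_le_ncard_of_finite ((s.erase y).finite_toSet.image π)
    _ ≤ (s.erase y).card + 1 := by
        gcongr
        exact (Set.ncard_image_le (s.erase y).finite_toSet).trans_eq (Set.ncard_coe_finset _)
    _ = (maximalIdeal R).spanFinrank := by rw [Finset.card_erase_add_one hy, hcard]

theorem exists_mem_maximalIdeal_notMem_sq_notMem_minimalPrimes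
    (hm : maximalIdeal R ∉ minimalPrimes R) :
    ∃ x ∈ maximalIdeal R, x ∉ maximalIdeal R ^ 2 ∧ ∀ P ∈ minimalPrimes R, x ∉ P := by
  have not_le {P : Ideal R} (hP : P ∈ minimalPrimes R) : ¬ maximalIdeal R ≤ P := fun hle ↦
    hm (le_antisymm hle (le_maximalIdeal hP.1.1.ne_top) ▸ hP)
  have not_le_sq : ¬ maximalIdeal R ≤ maximalIdeal R ^ 2 := fun hle ↦ by
    have hbot := Submodule.eq_bot_of_le_smul_of_le_jacobson_bot (maximalIdeal R) (maximalIdeal R)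
      (IsNoetherian.noetherian _) (by rwa [pow_two] at hle) (maximalIdeal_le_jacobson _)
    obtain ⟨P, hP, -⟩ := Ideal.exists_minimalPrimes_le (bot_le : ⊥ ≤ maximalIdeal R)
    exact not_le hP (hbot ▸ bot_le)
  by_contra! hcover
  obtain ⟨P, rfl | hP, hle⟩ := (Ideal.subset_union_prime_finite
    ((minimalPrimes.finite_of_isNoetherianRing R).insert (maximalIdeal R ^ 2))
    (f := id) (maximalIdeal R ^ 2) (maximalIdeal R ^ 2)
    (fun P hP hne _ ↦ (hP.resolve_left hne).1.1)).1 fun x hx ↦ by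
      by_cases hx2 : x ∈ maximalIdeal R ^ 2
      · exact Set.mem_biUnion (Set.mem_insert _ _) hx2
      · obtain ⟨P, hP, hxP⟩ := hcover x hx hx2
        exact Set.mem_biUnion (Set.mem_insert_of_mem _ hP) hxP
  · exact not_le_sq hle
  · exact not_le hP hle

end

theorem isDomain_of_isDomain_quotient_span_singleton {R : Type*} [CommRing R] [IsNoetherianRing R]
    {x : R} (hxJ : x ∈ Ideal.jacobson (⊥ : Ideal R)) (hx : ∀ P ∈ minimalPrimes R, x ∉ P)
    [IsDomain (R ⧸ Ideal.span {x})] : IsDomain R := by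
  have : (Ideal.span {x}).IsPrime := (Ideal.Quotient.isDomain_iff_prime _).1 ‹_›
  obtain ⟨P, hP, hPx⟩ := Ideal.exists_minimalPrimes_le (bot_le : ⊥ ≤ Ideal.span {x})
  have hPprime : P.IsPrime := hP.1.1
  have hbot : P = ⊥ := by
    refine Submodule.eq_bot_of_le_smul_of_le_jacobson_bot (Ideal.span {x}) P
      (IsNoetherian.noetherian _) (fun y hy ↦ ?_) ((Ideal.span_singleton_le_iff_mem _).2 hxJ)
    obtain ⟨z, rfl⟩ := Ideal.mem_span_singleton.1 (hPx hy)
    exact Ideal.mul_mem_mul (Ideal.mem_span_singleton_self x)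
      ((hPprime.mem_or_mem hy).resolve_left (hx P hP))
  subst hbot
  exact IsDomain.of_bot_isPrime R

theorem isRegularLocalRing_quotient_span_singleton {R : Type*} [CommRing R] [IsRegularLocalRing R]
    {x : R} (hx : x ∈ maximalIdeal R) (hx2 : x ∉ maximalIdeal R ^ 2) :
    IsRegularLocalRing (R ⧸ Ideal.span {x}) := by
  have : Nontrivial (R ⧸ Ideal.span {x}) := Ideal.Quotient.nontrivial_iff.2
    (ne_top_of_le_ne_top (maximalIdeal.isMaximal R).ne_top
      ((Ideal.span_singleton_le_iff_mem _).2 hx))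
  have : IsLocalRing (R ⧸ Ideal.span {x}) :=
    .of_surjective' (Ideal.Quotient.mk _) Ideal.Quotient.mk_surjective
  refine .of_spanFinrank_maximalIdeal_le _ ?_
  refine (WithBot.add_le_add_iff_right' (c := 1) (by decide) (by decide)).1 ?_
  calc ((maximalIdeal (R ⧸ Ideal.span {x})).spanFinrank + 1 : WithBot ℕ∞)
      ≤ (maximalIdeal R).spanFinrank := by
        exact_mod_cast spanFinrank_maximalIdeal_quotient_add_one_le hx hx2
    _ = ringKrullDim R := IsRegularLocalRing.spanFinrank_maximalIdeal
    _ ≤ ringKrullDim (R ⧸ Ideal.span {x}) + 1 := by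
        simpa only [Set.encard_singleton] using!
          ringKrullDim_le_ringKrullDim_quotient_add_encard {x} <|
            Set.singleton_subset_iff.2 (by rwa [ringJacobson_eq_maximalIdeal])

theorem maximalIdeal_notMem_minimalPrimes_of_not_isField {R : Type*} [CommRing R]
    [IsRegularLocalRing R] (hR : ¬ IsField R) : maximalIdeal R ∉ minimalPrimes R := by
  rw [isField_iff_maximalIdeal_eq, ← Submodule.spanFinrank_eq_zero_iff_eq_bot
    (IsNoetherian.noetherian _)] at hR
  intro hm
  have := IsRegularLocalRing.spanFinrank_maximalIdeal (R := R)
  rw [← maximalIdeal_height_eq_ringKrullDim, Ideal.height_eq_zero_iff.2 hm] at this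
  exact hR (by exact_mod_cast this)

theorem isRegularLocalRing_induction {motive : ∀ (R : Type u) [CommRing R], Prop}
    (field : ∀ (R : Type u) [CommRing R], IsField R → motive R)
    (quotient : ∀ (R : Type u) [CommRing R] [IsRegularLocalRing R], ¬ IsField R →
      (∀ x ∈ maximalIdeal R, x ∉ maximalIdeal R ^ 2 → motive (R ⧸ Ideal.span {x})) → motive R)
    (R : Type u) [CommRing R] [IsRegularLocalRing R] : motive R := by
  induction hn : (maximalIdeal R).spanFinrank using Nat.strong_induction_on generalizing R with
  | _ n ih =>
    by_cases hR : IsField R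
    · exact field R hR
    · refine quotient R hR fun x hx hx2 ↦ ?_
      have := isRegularLocalRing_quotient_span_singleton hx hx2
      exact ih _ (hn ▸ spanFinrank_maximalIdeal_quotient_add_one_le hx hx2) _ rfl

theorem isDomain_of_isRegularLocalRing (R : Type*) [CommRing R] [IsRegularLocalRing R] :
    IsDomain R := by
  refine isRegularLocalRing_induction (motive := fun R _ ↦ IsDomain R)
    (fun R _ hR ↦ hR.isDomain) (fun R _ _ hR ih ↦ ?_) R
  obtain ⟨x, hx, hx2, hxmin⟩ := exists_mem_maximalIdeal_notMem_sq_notMem_minimalPrimes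
    (maximalIdeal_notMem_minimalPrimes_of_not_isField hR)
  have := ih x hx hx2
  exact isDomain_of_isDomain_quotient_span_singleton (maximalIdeal_le_jacobson _ hx) hxmin

theorem isIntegrallyClosed_of_isRegularLocalRing (R : Type*) [CommRing R] [IsRegularLocalRing R] :
    IsIntegrallyClosed R := by
  refine isRegularLocalRing_induction (motive := fun R _ ↦ IsIntegrallyClosed R)
    (fun R _ hR ↦ ?_) (fun R _ _ hR ih ↦ ?_) R
  · let := hR.toField
    infer_instance
  · have := isDomain_of_isRegularLocalRing R
    obtain ⟨x, hx, hx2, -⟩ := exists_mem_maximalIdeal_notMem_sq_notMem_minimalPrimes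
      (maximalIdeal_notMem_minimalPrimes_of_not_isField hR)
    have := isRegularLocalRing_quotient_span_singleton hx hx2
    have hdom := isDomain_of_isRegularLocalRing (R ⧸ Ideal.span {x})
    have := ih x hx hx2
    have hx0 : x ≠ 0 := by rintro rfl; exact hx2 (zero_mem _)
    exact isIntegrallyClosed_of_quotient_span_singleton
      ((Ideal.span_singleton_prime hx0).1 ((Ideal.Quotient.isDomain_iff_prime _).1 hdom))
      (maximalIdeal_le_jacobson _ hx)

end RegularLocalRing

section TwoGenerated

variable {R : Type*} [CommRing R]

theorem span_pair_eq_span_pair_of_isUnit {r s x y : R} (hr : IsUnit r) :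
    Ideal.span {x, y} = Ideal.span {r * x + s * y, y} := by
  obtain ⟨r, rfl⟩ := hr
  apply le_antisymm <;> rw [Ideal.span_le, Set.pair_subset_iff]
  · refine ⟨Ideal.mem_span_pair.2 ⟨↑r⁻¹, -(↑r⁻¹ * s), ?_⟩, Ideal.subset_span (.inr rfl)⟩
    linear_combination x * r.inv_mul
  · exact ⟨Ideal.mem_span_pair.2 ⟨r, s, rfl⟩, Ideal.subset_span (.inr rfl)⟩

variable [IsLocalRing R]

theorem span_pair_isPrincipal_iff {a b : R} :
    (Ideal.span {a, b}).IsPrincipal ↔ a ∣ b ∨ b ∣ a := by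
  constructor
  · rintro ⟨c, hc⟩
    change Ideal.span {a, b} = Ideal.span {c} at hc
    obtain ⟨ha, hb⟩ := Set.pair_subset_iff.1 (Ideal.span_le.1 hc.le)
    obtain ⟨u, hu⟩ := Ideal.mem_span_singleton.1 ha
    obtain ⟨v, hv⟩ := Ideal.mem_span_singleton.1 hb
    obtain ⟨r, s, hrs⟩ := Ideal.mem_span_pair.1 (hc ▸ Ideal.mem_span_singleton_self c)
    rcases isUnit_or_isUnit_one_sub_self (r * u + s * v) with hunit | hunit
    · rcases isUnit_or_isUnit_of_isUnit_add hunit with hru | hsv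
      · exact .inl (hu ▸ hv ▸ mul_dvd_mul_left c (isUnit_of_mul_isUnit_right hru).dvd)
      · exact .inr (hu ▸ hv ▸ mul_dvd_mul_left c (isUnit_of_mul_isUnit_right hsv).dvd)
    · have hc0 : c = 0 := hunit.mul_left_eq_zero.1 (by rw [hu, hv] at hrs; linear_combination -hrs)
      exact .inl (by simp [hu, hv, hc0])
  · rintro (h | h)
    · rw [Set.pair_comm, Ideal.span, Submodule.span_insert_eq_span (Ideal.mem_span_singleton.2 h)]
      exact ⟨a, rfl⟩
    · rw [Ideal.span, Submodule.span_insert_eq_span (Ideal.mem_span_singleton.2 h)]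
      exact ⟨b, rfl⟩

theorem exists_span_pair_eq_of_notMem_sq_maximalIdeal {q x y : R} (hq : q ∉ maximalIdeal R ^ 2)
    (hqI : q ∈ Ideal.span {x, y}) : ∃ z, Ideal.span {x, y} = Ideal.span {q, z} := by
  by_cases hI : Ideal.span {x, y} = ⊤
  · exact ⟨1, by rw [hI, eq_comm, Ideal.eq_top_iff_one]; exact Ideal.subset_span (.inr rfl)⟩
  obtain ⟨hx, hy⟩ := Set.pair_subset_iff.1 (Ideal.span_le.1 (le_maximalIdeal hI))
  obtain ⟨r, s, rfl⟩ := Ideal.mem_span_pair.1 hqI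
  by_cases hr : IsUnit r
  · exact ⟨y, span_pair_eq_span_pair_of_isUnit hr⟩
  by_cases hs : IsUnit s
  · exact ⟨x, by rw [Set.pair_comm, add_comm, span_pair_eq_span_pair_of_isUnit hs]⟩
  · rw [pow_two] at hq
    exact absurd (add_mem (Ideal.mul_mem_mul hr hx) (Ideal.mul_mem_mul hs hy)) hq

theorem exists_eq_span_pair_or_eq_top_iff {q : R} (hq : q ∉ maximalIdeal R ^ 2) {I : Ideal R}
    (hqI : q ∈ I) :
    ((∃ x y, I = Ideal.span {x, y}) ∨ I = ⊤) ↔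
      (I.map (Ideal.Quotient.mk (Ideal.span {q}))).IsPrincipal := by
  let π := Ideal.Quotient.mk (Ideal.span {q})
  constructor
  · rintro (⟨x, y, rfl⟩ | rfl)
    · obtain ⟨z, hz⟩ := exists_span_pair_eq_of_notMem_sq_maximalIdeal hq hqI
      have hπq : π q = 0 := Ideal.Quotient.eq_zero_iff_mem.2 (Ideal.mem_span_singleton_self q)
      rw [hz, Ideal.map_span, Set.image_pair, hπq, Ideal.span_insert_zero]
      exact ⟨π z, rfl⟩
    · rw [Ideal.map_top]
      exact top_isPrincipal
  · rintro ⟨z, hz⟩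
    obtain ⟨z, rfl⟩ := Ideal.Quotient.mk_surjective z
    refine .inl ⟨z, q, ?_⟩
    calc I = (I.map π).comap π := by
          rw [Ideal.comap_map_of_surjective' π Ideal.Quotient.mk_surjective, Ideal.mk_ker,
            sup_eq_left.2 ((Ideal.span_singleton_le_iff_mem _).2 hqI)]
      _ = ((Ideal.span {z}).map π).comap π := by
          rw [hz, Ideal.map_span, Set.image_singleton, Ideal.submodule_span_eq]
      _ = Ideal.span {z, q} := by
          rw [Ideal.comap_map_of_surjective' π Ideal.Quotient.mk_surjective, Ideal.mk_ker,
            Ideal.span_insert]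

theorem exists_span_triple_eq_span_pair_or_eq_top_iff {q : R} (hq : q ∉ maximalIdeal R ^ 2)
    [Nontrivial (R ⧸ Ideal.span {q})] (h k : R) :
    ((∃ x y, Ideal.span {q, h, k} = Ideal.span {x, y}) ∨ Ideal.span {q, h, k} = ⊤) ↔
      Ideal.Quotient.mk (Ideal.span {q}) h ∣ Ideal.Quotient.mk (Ideal.span {q}) k ∨
        Ideal.Quotient.mk (Ideal.span {q}) k ∣ Ideal.Quotient.mk (Ideal.span {q}) h := by
  have : IsLocalRing (R ⧸ Ideal.span {q}) :=
    .of_surjective' (Ideal.Quotient.mk _) Ideal.Quotient.mk_surjective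
  have hπq := Ideal.Quotient.eq_zero_iff_mem.2 (Ideal.mem_span_singleton_self q)
  rw [exists_eq_span_pair_or_eq_top_iff hq (Ideal.subset_span (.inl rfl)), Ideal.map_span,
    Set.image_insert_eq, Set.image_pair, hπq, Ideal.span_insert_zero, span_pair_isPrincipal_iff]

end TwoGenerated

section Grade

section

variable {R M : Type*} [CommRing R] [IsLocalRing R] [AddCommGroup M] [Module R M]

theorem mem_maximalIdeal_of_isRegular {rs : List R} (h : IsRegular M rs) {r : R} (hr : r ∈ rs) :
    r ∈ maximalIdeal R := by
  have hne : Ideal.ofList rs ≠ ⊤ := fun htop ↦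
    h.top_ne_smul (by rw [htop, Submodule.top_smul])
  exact le_maximalIdeal hne (Ideal.subset_span hr)

theorem isWeaklyRegular_pow_cons [IsNoetherian R M] {r : R} {rs : List R}
    (h : IsWeaklyRegular M (r :: rs)) (hmem : ∀ x ∈ r :: rs, x ∈ maximalIdeal R) {k : ℕ}
    (hk : k ≠ 0) : IsWeaklyRegular M (r ^ k :: rs) := by
  have hlast : IsWeaklyRegular M (rs ++ [r]) :=
    isWeaklyRegular_of_perm_of_subset_maximalIdeal h (List.perm_append_singleton r rs).symm hmem
  rw [isWeaklyRegular_append_iff, isWeaklyRegular_singleton_iff] at hlast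
  have hpow : IsWeaklyRegular M (rs ++ [r ^ k]) := by
    rw [isWeaklyRegular_append_iff, isWeaklyRegular_singleton_iff]
    exact ⟨hlast.1, hlast.2.pow k⟩
  refine isWeaklyRegular_of_perm_of_subset_maximalIdeal hpow (List.perm_append_singleton _ rs) ?_
  simp only [List.forall_mem_append, List.forall_mem_singleton]
  rw [List.forall_mem_cons] at hmem
  exact ⟨hmem.2, Ideal.pow_mem_of_mem _ hmem.1 k hk.pos⟩

theorem isWeaklyRegular_map_pow [IsNoetherian R M] {rs : List R} (h : IsWeaklyRegular M rs)
    (hmem : ∀ r ∈ rs, r ∈ maximalIdeal R) {e : R → ℕ} (he : ∀ r ∈ rs, e r ≠ 0) :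
    IsWeaklyRegular M (rs.map fun r ↦ r ^ e r) := by
  induction rs generalizing M with
  | nil => exact h
  | cons r rs ih =>
    have hr := isWeaklyRegular_pow_cons h hmem (he r List.mem_cons_self)
    rw [isWeaklyRegular_cons_iff] at hr
    rw [List.map_cons, isWeaklyRegular_cons_iff]
    exact ⟨hr.1, ih hr.2 (List.forall_mem_of_forall_mem_cons hmem)
      (List.forall_mem_of_forall_mem_cons he)⟩

theorem isRegular_map_pow [IsNoetherian R M] {rs : List R} (h : IsRegular M rs)
    {e : R → ℕ} (he : ∀ r ∈ rs, e r ≠ 0) : IsRegular M (rs.map fun r ↦ r ^ e r) := by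
  have := h.nontrivial
  refine IsRegular.of_isWeaklyRegular_of_mem_maximalIdeal M ?_
    (isWeaklyRegular_map_pow h.toIsWeaklyRegular (fun _ ↦ mem_maximalIdeal_of_isRegular h) he)
  simp only [List.forall_mem_map]
  exact fun r hr ↦ Ideal.pow_mem_of_mem _ (mem_maximalIdeal_of_isRegular h hr) _ (he r hr).pos

end

variable {S : Type*} [CommRing S]

theorem containsRegSeq3_of_le_radical [IsLocalRing S] [IsNoetherianRing S] {I J : Ideal S}
    (hIJ : I ≤ J.radical) (hI : ContainsRegSeq3 S I) : ContainsRegSeq3 S J := by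
  obtain ⟨rs, hlen, hmem, hrs⟩ := hI
  have hpow (r : S) : ∃ e : ℕ, e ≠ 0 ∧ (r ∈ I → r ^ e ∈ J) := by
    by_cases hr : r ∈ I
    · obtain ⟨e, he⟩ := hIJ hr
      exact ⟨e + 1, e.succ_ne_zero, fun _ ↦ pow_succ r e ▸ J.mul_mem_right r he⟩
    · exact ⟨1, one_ne_zero, fun h ↦ absurd h hr⟩
  choose e he0 he using hpow
  refine ⟨rs.map fun r ↦ r ^ e r, by rw [List.length_map, hlen], ?_,
    isRegular_map_pow hrs fun r _ ↦ he0 r⟩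
  simp only [List.forall_mem_map]
  exact fun r hr ↦ he r (hmem r hr)

theorem containsRegSeq3_iff_of_radical_eq [IsLocalRing S] [IsNoetherianRing S] {I J : Ideal S}
    (h : I.radical = J.radical) : ContainsRegSeq3 S I ↔ ContainsRegSeq3 S J :=
  ⟨containsRegSeq3_of_le_radical (h ▸ Ideal.le_radical),
    containsRegSeq3_of_le_radical (h ▸ Ideal.le_radical)⟩

theorem radical_span_pow_add_mul (q h₁ h₂ a b : S) {n : ℕ} (hn : n ≠ 0) :
    (Ideal.span {q, h₁ ^ n + a * q, h₂ ^ n + b * q}).radical =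
      (Ideal.span {q, h₁, h₂}).radical := by
  have span_le_iff {J : Ideal S} (hJ : J.IsRadical) :
      Ideal.span {q, h₁ ^ n + a * q, h₂ ^ n + b * q} ≤ J ↔ Ideal.span {q, h₁, h₂} ≤ J := by
    simp only [Ideal.span_le, Set.insert_subset_iff, Set.singleton_subset_iff, SetLike.mem_coe]
    have pow_mem_iff {h : S} : h ^ n ∈ J ↔ h ∈ J :=
      ⟨fun hpow ↦ hJ ⟨n, hpow⟩, fun hmem ↦ Ideal.pow_mem_of_mem J hmem n hn.pos⟩
    refine and_congr_right fun hq ↦ ?_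
    rw [J.add_mem_iff_left (J.mul_mem_left a hq), J.add_mem_iff_left (J.mul_mem_left b hq),
      pow_mem_iff, pow_mem_iff]
  exact le_antisymm
    ((Ideal.radical_isRadical _).radical_le_iff.2 <|
      (span_le_iff (Ideal.radical_isRadical _)).2 Ideal.le_radical)
    ((Ideal.radical_isRadical _).radical_le_iff.2 <|
      (span_le_iff (Ideal.radical_isRadical _)).1 Ideal.le_radical)

end Grade

theorem stmt13_general {S : Type*} [CommRing S] [IsLocalRing S] [IsNoetherianRing S] {q : S}
    [IsDomain (S ⧸ Ideal.span {q})] [IsIntegrallyClosed (S ⧸ Ideal.span {q})]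
    (hq : q ∉ maximalIdeal S ^ 2) {n : ℕ} (hn : n ≠ 0) {f g h₁ h₂ a b : S}
    (hf : f = h₁ ^ n + a * q) (hg : g = h₂ ^ n + b * q) :
    (((∃ x y, Ideal.span {q, h₁, h₂} = Ideal.span {x, y}) ∨ Ideal.span {q, h₁, h₂} = ⊤) ↔
        ((∃ x y, Ideal.span {q, f, g} = Ideal.span {x, y}) ∨ Ideal.span {q, f, g} = ⊤)) ∧
      (ContainsRegSeq3 S (Ideal.span {q, h₁, h₂}) ↔ ContainsRegSeq3 S (Ideal.span {q, f, g})) := by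
  subst hf hg
  constructor
  · have hπq := Ideal.Quotient.eq_zero_iff_mem.2 (Ideal.mem_span_singleton_self q)
    simp only [exists_span_triple_eq_span_pair_or_eq_top_iff hq, map_add, map_mul, map_pow, hπq,
      mul_zero, add_zero, IsIntegrallyClosed.pow_dvd_pow_iff hn]
  · exact containsRegSeq3_iff_of_radical_eq (radical_span_pow_add_mul q h₁ h₂ a b hn).symm

theorem stmt13
    {S : Type*} [CommRing S] [IsDomain S] [IsNoetherianRing S] [IsLocalRing S]
    {p : ℕ} (hp : p.Prime) (hp3 : 3 ≤ p)
    (hreg : ∃ s : Finset S, Ideal.span (s : Set S) = IsLocalRing.maximalIdeal S ∧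
      (s.card : WithBot ℕ∞) = ringKrullDim S)
    (hmix : ((p : ℕ) : S) ∈ IsLocalRing.maximalIdeal S ∧
      ((p : ℕ) : S) ∉ IsLocalRing.maximalIdeal S ^ 2)
    {f g h₁ h₂ a b : S} (hf : f = h₁ ^ p + a * (p : S)) (hg : g = h₂ ^ p + b * (p : S)) :
    (((∃ x y : S, Ideal.span {((p : ℕ) : S), h₁, h₂} = Ideal.span {x, y}) ∨ Ideal.span {((p : ℕ) : S), h₁, h₂} = ⊤) ↔ ((∃ x y : S, Ideal.span {((p : ℕ) : S), f, g} = Ideal.span {x, y}) ∨ Ideal.span {((p : ℕ) : S), f, g} = ⊤)) ∧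
      (ContainsRegSeq3 S (Ideal.span {((p : ℕ) : S), h₁, h₂}) ↔
        ContainsRegSeq3 S (Ideal.span {((p : ℕ) : S), f, g})) := by
  obtain ⟨s, hs, hcard⟩ := hreg
  have := isRegularLocalRing_of_span_finset_eq_maximalIdeal hs hcard
  have := isRegularLocalRing_quotient_span_singleton hmix.1 hmix.2
  have := isDomain_of_isRegularLocalRing (S ⧸ Ideal.span {(p : S)})
  have := isIntegrallyClosed_of_isRegularLocalRing (S ⧸ Ideal.span {(p : S)})
  exact stmt13_general hmix.2 hp.ne_zero hf hg
end

section
/- Assume S[ω] and S[μ] are integrally closed (i.e. f,g ∉ S^{p∧p²}) and h₁ ≠ 0, h₂ ≠ 0. Then for the prime P = (p, ω−h₁, μ−h₂)A, one has P^* = (A :_K P) = A·1 + A·p^{−1}(ω−h₁)^{p−1}(μ−h₂)^{p−1}. -/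
/-!
Put `x = ω - h₁`, `y = μ - h₂` and `A = S[ω,μ]`. Since `p` divides the inner binomial coefficients,
`x` is a root of a monic polynomial of degree `p` congruent to `T ^ p` modulo `p`, and likewise `y`;
as `[K : L] = p ^ 2`, the products `x ^ i * y ^ j` with `i, j < p` form an `S`-basis of `A`.
Multiplication by `x` shifts this basis, except that it sends the top row `i = p - 1` into `p A`.
So if `p` divides `z * x` and `z * y`, then `p` divides every coordinate of `z` but the one at
`x ^ (p - 1) * y ^ (p - 1)`: the ideal `(p A : (x, y))` is generated by `p` and this monomial.
Dividing by `p` turns it into `(A :_K P)`.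
-/

open Polynomial

section Basis

variable {R A ι κ : Type*} [CommRing R] [CommRing A] [Algebra R A] {ϖ : R} {x y z : A}

theorem mem_span_pair_of_forall_ne_dvd_repr (b : Module.Basis ι R A) {i : ι}
    (h : ∀ k ≠ i, ϖ ∣ b.repr z k) : z ∈ Ideal.span {algebraMap R A ϖ, b i} := by
  rw [← b.linearCombination_repr z, Finsupp.linearCombination_apply]
  refine sum_mem fun k _ => ?_
  change b.repr z k • b k ∈ _
  rw [Algebra.smul_def]
  rcases eq_or_ne k i with rfl | hk
  · exact Ideal.mul_mem_left _ _ (Ideal.subset_span (by simp))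
  · exact Ideal.mul_mem_right _ _
      (Ideal.mem_of_dvd _ (map_dvd (algebraMap R A) (h k hk)) (Ideal.subset_span (by simp)))

theorem dvd_repr_of_algebraMap_dvd (b : Module.Basis ι R A) (hz : algebraMap R A ϖ ∣ z) (i : ι) :
    ϖ ∣ b.repr z i := by
  obtain ⟨w, rfl⟩ := hz
  rw [← Algebra.smul_def]
  exact b.dvd_coord_smul i w ϖ

theorem dvd_repr_of_algebraMap_dvd_mul (b : Module.Basis ι R A) {i i' : ι}
    (hi : b.repr (b i * x) i' = 1) (hne : ∀ k ≠ i, ϖ ∣ b.repr (b k * x) i')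
    (hz : algebraMap R A ϖ ∣ z * x) : ϖ ∣ b.repr z i := by
  let φ : A →ₗ[R] R := b.coord i' ∘ₗ LinearMap.mulRight R x
  let π : R →ₗ[R] R ⧸ Ideal.span {ϖ} := Submodule.mkQ _
  have hπ {r : R} : π r = 0 ↔ ϖ ∣ r :=
    (Submodule.Quotient.mk_eq_zero _).trans Ideal.mem_span_singleton
  have hcoord : π ∘ₗ φ = π ∘ₗ b.coord i := b.ext fun k => by
    rcases eq_or_ne k i with rfl | hk
    · simp [φ, hi]
    · simpa [Finsupp.single_eq_of_ne' hk] using! hπ.2 (hne k hk)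
  exact hπ.1 ((LinearMap.congr_fun hcoord z).symm.trans (hπ.2 (dvd_repr_of_algebraMap_dvd b hz i')))

theorem dvd_repr_castSucc_of_algebraMap_dvd_mul {m : ℕ} (b : Module.Basis (Fin (m + 1) × κ) R A)
    {c : κ → A} (hb : ∀ i j, b (i, j) = x ^ (i : ℕ) * c j) (hx : algebraMap R A ϖ ∣ x ^ (m + 1))
    (hz : algebraMap R A ϖ ∣ z * x) (i : Fin m) (j : κ) : ϖ ∣ b.repr z (i.castSucc, j) := by
  have hshift (i : Fin m) (j : κ) : b (i.castSucc, j) * x = b (i.succ, j) := by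
    simp only [hb, Fin.val_castSucc, Fin.val_succ]
    ring
  have htop (j : κ) : algebraMap R A ϖ ∣ b (Fin.last m, j) * x := by
    rw [hb, Fin.val_last, mul_right_comm, ← pow_succ]
    exact hx.mul_right _
  refine dvd_repr_of_algebraMap_dvd_mul b (i' := (i.succ, j)) (by simp [hshift]) ?_ hz
  rintro ⟨k, l⟩ hk
  induction k using Fin.lastCases with
  | last => exact dvd_repr_of_algebraMap_dvd b (htop l) _
  | cast k =>
    have hne : (k.succ, l) ≠ (i.succ, j) := by simpa using hk
    simp [hshift, Finsupp.single_eq_of_ne' hne]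

theorem colon_pair_eq_span_pair {m n : ℕ} (b : Module.Basis (Fin (m + 1) × Fin (n + 1)) R A)
    (hb : ∀ i j, b (i, j) = x ^ (i : ℕ) * y ^ (j : ℕ)) (hx : algebraMap R A ϖ ∣ x ^ (m + 1))
    (hy : algebraMap R A ϖ ∣ y ^ (n + 1)) :
    (Ideal.span {algebraMap R A ϖ}).colon {x, y} =
      Ideal.span {algebraMap R A ϖ, x ^ m * y ^ n} := by
  refine le_antisymm (fun z hz => ?_) (Ideal.span_le.2 ?_)
  · have hzx : algebraMap R A ϖ ∣ z * x :=
      Ideal.mem_span_singleton.1 (Submodule.mem_colon.1 hz x (by simp))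
    have hzy : algebraMap R A ϖ ∣ z * y :=
      Ideal.mem_span_singleton.1 (Submodule.mem_colon.1 hz y (by simp))
    have hrow := dvd_repr_castSucc_of_algebraMap_dvd_mul b hb hx hzx
    have hcol := dvd_repr_castSucc_of_algebraMap_dvd_mul (b.reindex (Equiv.prodComm _ _))
      (c := fun i => x ^ (i : ℕ)) (fun j i => by simp [hb, mul_comm]) hy hzy
    have hlast : b (Fin.last m, Fin.last n) = x ^ m * y ^ n := by simp [hb]
    rw [← hlast]
    refine mem_span_pair_of_forall_ne_dvd_repr b ?_
    rintro ⟨i, j⟩ hij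
    induction i using Fin.lastCases with
    | cast i => exact hrow i j
    | last =>
      induction j using Fin.lastCases with
      | cast j => simpa only [Module.Basis.repr_reindex_apply] using! hcol j (Fin.last m)
      | last => exact absurd rfl hij
  · rintro _ (rfl | rfl)
    · exact Ideal.le_colon (Ideal.mem_span_singleton_self _)
    · refine Submodule.mem_colon.2 ?_
      rintro _ (rfl | rfl) <;> rw [smul_eq_mul, Ideal.mem_span_singleton]
      · rw [mul_right_comm, ← pow_succ]
        exact hx.mul_right _
      · rw [mul_assoc, ← pow_succ]
        exact hy.mul_left _

end Basis

section Adjoin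

variable {R K : Type*} [CommRing R] [CommRing K] [Algebra R K]

theorem adjoin_insert_sub_algebraMap (x : K) (r : R) (s : Set K) :
    Algebra.adjoin R (insert (x - algebraMap R K r) s) = Algebra.adjoin R (insert x s) := by
  apply le_antisymm <;>
    refine Algebra.adjoin_le
      (Set.insert_subset ?_ ((Set.subset_insert _ _).trans Algebra.subset_adjoin))
  · exact sub_mem (Algebra.subset_adjoin (Set.mem_insert _ _)) (Subalgebra.algebraMap_mem _ r)
  · have hx : x - algebraMap R K r + algebraMap R K r ∈
        Algebra.adjoin R (insert (x - algebraMap R K r) s) :=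
      add_mem (Algebra.subset_adjoin (Set.mem_insert _ _)) (Subalgebra.algebraMap_mem _ r)
    rwa [sub_add_cancel] at hx

theorem adjoin_pair_sub_algebraMap (x y : K) (r s : R) :
    Algebra.adjoin R {x - algebraMap R K r, y - algebraMap R K s} = Algebra.adjoin R {x, y} := by
  rw [adjoin_insert_sub_algebraMap, Set.pair_comm, adjoin_insert_sub_algebraMap, Set.pair_comm]

variable {x y : K} {F G : R[X]} {m n : ℕ}

theorem span_range_pow_eq_adjoin (hF : F.Monic) (hx : aeval x F = 0) (hm : F.natDegree = m) :
    Submodule.span R (Set.range fun i : Fin m => x ^ (i : ℕ)) =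
      Subalgebra.toSubmodule (Algebra.adjoin R {x}) := by
  rw [← Submodule.span_range_natDegree_eq_adjoin hF hx, hm]
  congr 1
  ext z
  simp [Fin.exists_iff]

theorem span_range_pow_mul_pow_eq_adjoin (hF : F.Monic) (hx : aeval x F = 0)
    (hm : F.natDegree = m) (hG : G.Monic) (hy : aeval y G = 0) (hn : G.natDegree = n) :
    Submodule.span R (Set.range fun ij : Fin m × Fin n => x ^ (ij.1 : ℕ) * y ^ (ij.2 : ℕ)) =
      Subalgebra.toSubmodule (Algebra.adjoin R {x, y}) := by
  rw [Set.insert_eq, Algebra.adjoin_union_coe_submodule, ← span_range_pow_eq_adjoin hF hx hm,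
    ← span_range_pow_eq_adjoin hG hy hn, Submodule.span_mul_span, ← Set.image2_mul,
    Set.image2_range]

theorem exists_basis_adjoin_pair {A : Subalgebra R K} {x y : A}
    (hA : Algebra.adjoin R {(x : K), (y : K)} = A)
    (hF : F.Monic) (hx : aeval (x : K) F = 0) (hm : F.natDegree = m)
    (hG : G.Monic) (hy : aeval (y : K) G = 0) (hn : G.natDegree = n)
    (hli : LinearIndependent R
      fun ij : Fin m × Fin n => (x : K) ^ (ij.1 : ℕ) * (y : K) ^ (ij.2 : ℕ)) :
    ∃ b : Module.Basis (Fin m × Fin n) R A, ∀ i j, b (i, j) = x ^ (i : ℕ) * y ^ (j : ℕ) := by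
  have hspan := span_range_pow_mul_pow_eq_adjoin hF hx hm hG hy hn
  rw [hA] at hspan
  refine ⟨(Module.Basis.span hli).map (LinearEquiv.ofEq _ _ hspan), fun i j => Subtype.ext ?_⟩
  rw [Module.Basis.map_apply, LinearEquiv.coe_ofEq_apply, Module.Basis.span_apply]
  rfl

theorem algebraMap_dvd_pow_natDegree {ϖ : R} (hF : F.Monic)
    (hFϖ : F.IsWeaklyEisensteinAt (Ideal.span {ϖ})) (hx : aeval x F = 0) :
    algebraMap R K ϖ ∣ x ^ F.natDegree := by
  nontriviality K
  obtain ⟨u, -, hu⟩ := hFϖ.exists_mem_adjoin_mul_eq_pow_natDegree hx hF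
  exact ⟨u, by rw [hu, hF.natDegree_map]⟩

end Adjoin

theorem linearIndependent_pow_mul_pow_of_finrank_eq {R L K : Type*} [CommRing R] [Field L]
    [CommRing K] [Algebra R L] [FaithfulSMul R L] [Algebra L K] [Algebra R K] [IsScalarTower R L K]
    {x y : K} {F G : R[X]} {m n : ℕ}
    (hF : F.Monic) (hx : aeval x F = 0) (hm : F.natDegree = m)
    (hG : G.Monic) (hy : aeval y G = 0) (hn : G.natDegree = n)
    (hxy : Algebra.adjoin L {x, y} = ⊤) (hfin : Module.finrank L K = m * n) :
    LinearIndependent R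
      fun ij : Fin m × Fin n => x ^ (ij.1 : ℕ) * y ^ (ij.2 : ℕ) := by
  have hxL : aeval x (F.map (algebraMap R L)) = 0 := by rwa [aeval_map_algebraMap]
  have hyL : aeval y (G.map (algebraMap R L)) = 0 := by rwa [aeval_map_algebraMap]
  have hspan := span_range_pow_mul_pow_eq_adjoin
    (hF.map (algebraMap R L)) hxL ((hF.natDegree_map _).trans hm)
    (hG.map (algebraMap R L)) hyL ((hG.natDegree_map _).trans hn)
  rw [hxy, Algebra.top_toSubmodule] at hspan
  exact (linearIndependent_of_top_le_span_of_card_eq_finrank hspan.ge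
    (by simp [hfin])).restrict_scalars' R

section Colon

variable {R K : Type*} [CommRing R] [Field K] [Algebra R K] {A : Subalgebra R K}

theorem forall_mem_span_insert_mul_mem_iff {d : A} (hd : d ≠ 0) {s : Set A} {t : K} :
    (∀ z ∈ Ideal.span (insert d s), t * (z : K) ∈ A) ↔
      ∃ c ∈ (Ideal.span {d}).colon s, t = (c : K) * (d : K)⁻¹ := by
  have hdK : (d : K) ≠ 0 := by simpa using hd
  constructor
  · intro ht
    refine ⟨⟨t * d, ht d (Ideal.subset_span (by simp))⟩, Submodule.mem_colon.2 fun z hz => ?_,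
      (mul_inv_cancel_right₀ hdK t).symm⟩
    have htz : t * (z : K) ∈ A := ht z (Ideal.subset_span (Set.mem_insert_of_mem _ hz))
    exact Ideal.mem_span_singleton.2 ⟨⟨t * z, htz⟩, Subtype.ext (by simp; ring)⟩
  · rintro ⟨c, hc, rfl⟩ z hz
    have hcz : d ∣ c * z := by
      obtain ⟨a, w, hw, rfl⟩ := Ideal.mem_span_insert.1 hz
      have hcw : c * w ∈ Ideal.span {d} := by
        have hle : Ideal.span s ≤ (Ideal.span {d}).colon {c} := Ideal.span_le.2 fun v hv => by
          simpa [mul_comm] using Submodule.mem_colon.1 hc v hv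
        simpa [mul_comm] using hle hw
      rw [mul_add, mul_left_comm]
      exact dvd_add ((dvd_mul_left d c).mul_left a) (Ideal.mem_span_singleton.1 hcw)
    obtain ⟨q, hq⟩ := hcz
    have hq' : (c : K) * (d : K)⁻¹ * z = q := by
      rw [mul_right_comm, ← MulMemClass.coe_mul, hq, MulMemClass.coe_mul,
        mul_comm (d : K), mul_inv_cancel_right₀ hdK]
    exact hq' ▸ q.2

theorem forall_mem_span_mul_mem_iff_of_isWeaklyEisensteinAt {x y : A} {ϖ : R} {F G : R[X]}
    {m n : ℕ} (hA : Algebra.adjoin R {(x : K), (y : K)} = A) (hϖ : algebraMap R K ϖ ≠ 0)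
    (hF : F.Monic) (hFϖ : F.IsWeaklyEisensteinAt (Ideal.span {ϖ}))
    (hx : aeval (x : K) F = 0) (hm : F.natDegree = m + 1)
    (hG : G.Monic) (hGϖ : G.IsWeaklyEisensteinAt (Ideal.span {ϖ}))
    (hy : aeval (y : K) G = 0) (hn : G.natDegree = n + 1)
    (hli : LinearIndependent R
      fun ij : Fin (m + 1) × Fin (n + 1) => (x : K) ^ (ij.1 : ℕ) * (y : K) ^ (ij.2 : ℕ))
    {t : K} :
    (∀ z ∈ Ideal.span {algebraMap R A ϖ, x, y}, t * (z : K) ∈ A) ↔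
      ∃ α β : A, t = α + β * ((algebraMap R K ϖ)⁻¹ * ((x : K) ^ m * (y : K) ^ n)) := by
  obtain ⟨b, hb⟩ := exists_basis_adjoin_pair hA hF hx hm hG hy hn hli
  have hxA : aeval x F = 0 := Subtype.ext (by simpa using hx)
  have hyA : aeval y G = 0 := Subtype.ext (by simpa using hy)
  have hxm := algebraMap_dvd_pow_natDegree hF hFϖ hxA
  have hyn := algebraMap_dvd_pow_natDegree hG hGϖ hyA
  rw [hm] at hxm
  rw [hn] at hyn
  have hϖA : algebraMap R A ϖ ≠ 0 := fun h => hϖ (congrArg Subtype.val h)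
  rw [forall_mem_span_insert_mul_mem_iff hϖA, colon_pair_eq_span_pair b hb hxm hyn]
  simp only [Ideal.mem_span_pair, exists_exists_exists_and_eq]
  refine exists₂_congr fun α β => ?_
  have hdiv : ((α * algebraMap R A ϖ + β * (x ^ m * y ^ n) : A) : K) * (algebraMap R K ϖ)⁻¹ =
      α + β * ((algebraMap R K ϖ)⁻¹ * ((x : K) ^ m * (y : K) ^ n)) := by
    push_cast
    rw [add_mul, mul_inv_cancel_right₀ hϖ]
    ring
  rw [← hdiv, Subalgebra.coe_algebraMap]

end Colon

section BinomialPolynomial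

variable {R : Type*} [CommRing R]

theorem monic_taylor_X_pow_sub_C {n : ℕ} (f h : R) (hn : n ≠ 0) :
    (taylor h (X ^ n - C f)).Monic := by
  rw [Monic, leadingCoeff_taylor]
  exact monic_X_pow_sub_C f hn

theorem isWeaklyEisensteinAt_taylor_X_pow_sub_C {p : ℕ} (hp : p.Prime) {f h a : R}
    (hf : f = h ^ p + a * (p : R)) :
    (taylor h (X ^ p - C f)).IsWeaklyEisensteinAt (Ideal.span {(p : R)}) := by
  refine (isWeaklyEisensteinAt_iff _ _).2 fun {k} hk => Ideal.mem_span_singleton.2 ?_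
  rw [natDegree_taylor, natDegree_sub_C] at hk
  replace hk := hk.trans_le (natDegree_X_pow_le p)
  rw [map_sub, taylor_X_pow, taylor_C, coeff_sub, coeff_X_add_C_pow]
  rcases Nat.eq_zero_or_pos k with rfl | hk0
  · rw [coeff_C_zero, hf]
    simp
  · rw [coeff_C_of_ne_zero hk0.ne', sub_zero]
    exact (Nat.cast_dvd_cast (hp.dvd_choose_self hk0.ne' hk)).mul_left _

end BinomialPolynomial

theorem stmt14_general
    {S : Type*} [CommRing S]
    {L : Type*} [Field L] [Algebra S L] [FaithfulSMul S L]
    {K : Type*} [Field K] [Algebra L K] [Algebra S K] [IsScalarTower S L K]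
    {p : ℕ} (hp : p.Prime) (hp0 : (p : S) ≠ 0)
    {f g h₁ h₂ a b : S} (hf : f = h₁ ^ p + a * (p : S)) (hg : g = h₂ ^ p + b * (p : S))
    {ω μ : K} (hω : ω ^ p = algebraMap S K f) (hμ : μ ^ p = algebraMap S K g)
    (hKgen : Algebra.adjoin L ({ω, μ} : Set K) = ⊤)
    (hdeg : Module.finrank L K = p ^ 2) :
    {x : K | ∀ z ∈ Pid p ω μ h₁ h₂, x * (z : K) ∈ Algebra.adjoin S ({ω, μ} : Set K)} =
      {x : K | ∃ α β : Algebra.adjoin S ({ω, μ} : Set K),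
        x = (α : K) + (β : K) * ((p : K)⁻¹ *
          ((ω - algebraMap S K h₁) ^ (p - 1) * (μ - algebraMap S K h₂) ^ (p - 1)))} := by
  have : Nontrivial S := nontrivial_of_ne _ _ hp0
  have : FaithfulSMul S K := FaithfulSMul.trans S L K
  have hpK : algebraMap S K p ≠ 0 := by
    rwa [Ne, FaithfulSMul.algebraMap_eq_zero_iff]
  have hp1 : p - 1 + 1 = p := Nat.sub_add_cancel hp.one_le
  let A := Algebra.adjoin S ({ω, μ} : Set K)
  let x : A := omegaA ω μ - algebraMap S A h₁
  let y : A := muA ω μ - algebraMap S A h₂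
  let F : S[X] := taylor h₁ (X ^ p - C f)
  let G : S[X] := taylor h₂ (X ^ p - C g)
  have hA : Algebra.adjoin S {(x : K), (y : K)} = A := adjoin_pair_sub_algebraMap ω μ h₁ h₂
  have hL : Algebra.adjoin L {(x : K), (y : K)} = ⊤ := by
    have h := adjoin_pair_sub_algebraMap ω μ (algebraMap S L h₁) (algebraMap S L h₂)
    rwa [← IsScalarTower.algebraMap_apply, ← IsScalarTower.algebraMap_apply, hKgen] at h
  have hF : F.Monic := monic_taylor_X_pow_sub_C f h₁ hp.ne_zero
  have hG : G.Monic := monic_taylor_X_pow_sub_C g h₂ hp.ne_zero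
  have hx : aeval (x : K) F = 0 := by simp [x, F, omegaA, hω]
  have hy : aeval (y : K) G = 0 := by simp [y, G, muA, hμ]
  have hm : F.natDegree = p - 1 + 1 := by simp [F, hp1]
  have hn : G.natDegree = p - 1 + 1 := by simp [G, hp1]
  have hli := linearIndependent_pow_mul_pow_of_finrank_eq hF hx hm hG hy hn hL
    (by rw [hdeg, hp1, sq])
  ext t
  have hdual := forall_mem_span_mul_mem_iff_of_isWeaklyEisensteinAt (t := t) hA hpK
    hF (isWeaklyEisensteinAt_taylor_X_pow_sub_C hp hf) hx hm
    hG (isWeaklyEisensteinAt_taylor_X_pow_sub_C hp hg) hy hn hli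
  simpa only [map_natCast] using! hdual

theorem stmt14
    {S : Type*} [CommRing S] [IsDomain S] [IsNoetherianRing S] [IsIntegrallyClosed S]
    {L : Type*} [Field L] [CharZero L] [Algebra S L] [IsFractionRing S L]
    {K : Type*} [Field K] [Algebra L K] [Algebra S K] [IsScalarTower S L K]
    {p : ℕ} (hp : p.Prime) (hp3 : 3 ≤ p) (hpS : Prime ((p : ℕ) : S))
    (hSmodp : IsIntegrallyClosed (S ⧸ Ideal.span {((p : ℕ) : S)}))
    {f g h₁ h₂ a b : S} (hf : f = h₁ ^ p + a * (p : S)) (hg : g = h₂ ^ p + b * (p : S))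
    (hfg : (¬IsUnit f ∧ ¬IsUnit g ∧ PaperSquarefree f ∧ PaperSquarefree g ∧ SatisfiesA1 f g) ∨
      (IsUnit f ∧ IsUnit g ∧ (∀ x : S, x ^ p ≠ f) ∧ (∀ x : S, x ^ p ≠ g)))
    {ω μ : K} (hω : ω ^ p = algebraMap S K f) (hμ : μ ^ p = algebraMap S K g)
    (hKgen : Algebra.adjoin L ({ω, μ} : Set K) = ⊤)
    (hdeg : Module.finrank L K = p ^ 2)
    (hicω : IsIntegrallyClosed (Algebra.adjoin S ({ω} : Set K)))
    (hicμ : IsIntegrallyClosed (Algebra.adjoin S ({μ} : Set K)))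
    (hh₁ : h₁ ≠ 0) (hh₂ : h₂ ≠ 0)
 :
    {x : K | ∀ z ∈ Pid p ω μ h₁ h₂, x * (z : K) ∈ Algebra.adjoin S ({ω, μ} : Set K)} =
      {x : K | ∃ α β : Algebra.adjoin S ({ω, μ} : Set K),
        x = (α : K) + (β : K) * ((p : K)⁻¹ *
          ((ω - algebraMap S K h₁) ^ (p - 1) * (μ - algebraMap S K h₂) ^ (p - 1)))} :=
  stmt14_general hp hpS.ne_zero hf hg hω hμ hKgen hdeg
end
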